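/- Let G be a Hermitian d×d complex matrix with G² = I, let H be a d×d complex matrix, and let ψ ∈ ℂ^d. Define f : ℝ → ℂ by f(θ) = ⟨ψ, exp(iθG/2) H exp(−iθG/2) ψ⟩. Then f is differentiable, and for every θ ∈ ℝ and every α ∈ ℝ with sin α ≠ 0, f'(θ) = (f(θ + α) − f(θ − α)) / (2 sin α). -/

import Mathlib

open Matrix

/-- The expectation value `f(θ) = ⟨ψ, e^{iθG/2} H e^{-iθG/2} ψ⟩` of a rotation-like gate. -/
noncomputable def rotExpectation {d : ℕ} (G H : Matrix (Fin d) (Fin d) ℂ)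
    (ψ : Fin d → ℂ) (t : ℝ) : ℂ :=
  star ψ ⬝ᵥ
    (NormedSpace.exp ((Complex.I * (t : ℂ) / 2) • G) * H *
      NormedSpace.exp ((-(Complex.I * (t : ℂ) / 2)) • G)).mulVec ψ

/-- The exponential of `z • G` for an involutive matrix `G`, written through the spectral
projections `(1 ± G) / 2` of `G`. -/
theorem exp_smul_of_mul_self_eq_one {n : Type*} [Fintype n] [DecidableEq n]
    {G : Matrix n n ℂ} (hG : G * G = 1) (z : ℂ) :
    NormedSpace.exp (z • G) =
      Complex.exp z • ((1 / 2 : ℂ) • (1 + G)) + Complex.exp (-z) • ((1 / 2 : ℂ) • (1 - G)) := by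
  have hpow : ∀ k : ℕ,
      G ^ k = (1 / 2 : ℂ) • (1 + G) + ((-1 : ℂ) ^ k) • ((1 / 2 : ℂ) • (1 - G)) := by
    intro k
    induction k with
    | zero => simp only [pow_zero, one_smul]; module
    | succ k ih =>
      rw [pow_succ, ih]
      simp only [add_mul, smul_mul_assoc, sub_mul, one_mul, hG, pow_succ]
      module
  have hexp : ∀ w : ℂ, HasSum (fun k : ℕ => ((k.factorial : ℂ)⁻¹) * w ^ k) (Complex.exp w) := by
    intro w
    have h := NormedSpace.exp_series_hasSum_exp' (𝕂 := ℂ) w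
    rwa [← Complex.exp_eq_exp_ℂ] at h
  rw [NormedSpace.exp_eq_tsum ℂ]
  refine HasSum.tsum_eq ?_
  refine (((hexp z).smul_const ((1 / 2 : ℂ) • (1 + G))).add
    ((hexp (-z)).smul_const ((1 / 2 : ℂ) • (1 - G)))).congr_fun ?_
  intro k
  rw [smul_pow, hpow, neg_pow z]
  module

/-- The expectation value of a gate with involutive generator is a trigonometric polynomial
of degree one. -/
theorem exists_rotExpectation_eq {d : ℕ} {G : Matrix (Fin d) (Fin d) ℂ} (hG : G * G = 1)
    (H : Matrix (Fin d) (Fin d) ℂ) (ψ : Fin d → ℂ) :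
    ∃ a b c : ℂ, ∀ t : ℝ, rotExpectation G H ψ t =
      a + b * Complex.exp (Complex.I * t) + c * Complex.exp (-(Complex.I * t)) := by
  set P : Matrix (Fin d) (Fin d) ℂ := (1 / 2 : ℂ) • (1 + G) with hP
  set Q : Matrix (Fin d) (Fin d) ℂ := (1 / 2 : ℂ) • (1 - G) with hQ
  refine ⟨star ψ ⬝ᵥ (P * H * P + Q * H * Q) *ᵥ ψ, star ψ ⬝ᵥ (P * H * Q) *ᵥ ψ,
    star ψ ⬝ᵥ (Q * H * P) *ᵥ ψ, fun t => ?_⟩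
  have hsq : ∀ w : ℂ, Complex.exp w = Complex.exp (w / 2) * Complex.exp (w / 2) := fun w => by
    rw [← Complex.exp_add, add_halves]
  have hinv : Complex.exp (Complex.I * t / 2) * Complex.exp (-(Complex.I * t / 2)) = 1 := by
    rw [← Complex.exp_add, add_neg_cancel, Complex.exp_zero]
  rw [rotExpectation, exp_smul_of_mul_self_eq_one hG, exp_smul_of_mul_self_eq_one hG, neg_neg,
    ← hP, ← hQ, hsq (Complex.I * t), hsq (-(Complex.I * t)), neg_div]
  simp only [add_mul, mul_add, smul_mul_assoc, mul_smul_comm, add_mulVec, smul_mulVec,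
    dotProduct_add, dotProduct_smul, smul_eq_mul]
  linear_combination (star ψ ⬝ᵥ (P * H * P) *ᵥ ψ + star ψ ⬝ᵥ (Q * H * Q) *ᵥ ψ) * hinv

/-- Parameter-shift rule: for a generator with `G² = I`, the derivative of the
expectation equals a finite difference of two shifted evaluations. -/
theorem stmt_5 {d : ℕ} (G H : Matrix (Fin d) (Fin d) ℂ)
    (hG : Gᴴ = G) (hG2 : G * G = 1) (ψ : Fin d → ℂ) :
    (∀ θ : ℝ, DifferentiableAt ℝ (rotExpectation G H ψ) θ) ∧
      ∀ θ α : ℝ, Real.sin α ≠ 0 →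
        deriv (rotExpectation G H ψ) θ =
          (rotExpectation G H ψ (θ + α) - rotExpectation G H ψ (θ - α)) /
            (2 * (Real.sin α : ℂ)) := by
  obtain ⟨a, b, c, hf⟩ := exists_rotExpectation_eq hG2 H ψ
  have hderiv : ∀ θ : ℝ, HasDerivAt (rotExpectation G H ψ)
      (Complex.I * (b * Complex.exp (Complex.I * θ) - c * Complex.exp (-(Complex.I * θ)))) θ := by
    intro θ
    have hlin : HasDerivAt (fun t : ℝ => Complex.I * (t : ℂ)) Complex.I θ := by
      simpa using (Complex.ofRealCLM.hasDerivAt (x := θ)).const_mul Complex.I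
    rw [funext hf]
    refine (((hlin.cexp.const_mul b).const_add a).add
      (hlin.fun_neg.cexp.const_mul c)).congr_deriv ?_
    ring
  refine ⟨fun θ => (hderiv θ).differentiableAt, fun θ α hα => ?_⟩
  have hα' : Complex.sin α ≠ 0 := by exact_mod_cast hα
  have hsin : 2 * Complex.sin α =
      (Complex.exp (-(Complex.I * α)) - Complex.exp (Complex.I * α)) * Complex.I := by
    rw [Complex.two_sin, neg_mul, mul_comm (α : ℂ)]
  rw [(hderiv θ).deriv, hf, hf, Complex.ofReal_sin, eq_div_iff (mul_ne_zero two_ne_zero hα'), hsin]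
  push_cast
  simp only [mul_add, neg_add, sub_eq_add_neg, Complex.exp_add]
  ring_nf
  simp only [Complex.I_sq]
  ring
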